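/- Let s > 0 and n ≥ 1. There exists a constant C depending only on n, s such that for every x₀ ∈ ℝⁿ, every M ≥ 0, and every polynomial P ∈ Γ(x₀, M), there exists a function F ∈ F^s(ℝⁿ) satisfying: (A) the ⌊s⌋-jet of F at x₀ equals P; (B) F ≥ 0 on ℝⁿ; (C) ‖F‖_{Ḟ^s(ℝⁿ)} ≤ C·M; and (D) ‖F‖_{C^s(ℝⁿ)} ≤ C·M, hence ‖F‖_{F^s(ℝⁿ)} ≤ C·M. -/

import Mathlib

open Set ENNReal
open scoped NNReal

noncomputable section

/-- The largest integer strictly less than `s` (for `s > 0`). -/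
def lowFloor (s : ℝ) : ℕ := ⌈s⌉₊ - 1

variable {E : Type*} [NormedAddCommGroup E] [NormedSpace ℝ E]

/-- `max_{0 ≤ m < s} sup_{x ∈ Ω} |∇^m F(x)|`, valued in `ℝ≥0∞`. -/
def derivSup (s : ℝ) (Ω : Set E) (F : E → ℝ) : ℝ≥0∞ :=
  ⨆ (m : ℕ) (_ : m ≤ lowFloor s) (x : E) (_ : x ∈ Ω),
    (‖iteratedFDerivWithin ℝ m F Ω x‖₊ : ℝ≥0∞)

/-- The homogeneous Hölder seminorm `‖F‖_{Ċ^s(Ω)}`, valued in `ℝ≥0∞`. -/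
def holderSemi (s : ℝ) (Ω : Set E) (F : E → ℝ) : ℝ≥0∞ :=
  ⨆ (x : E) (_ : x ∈ Ω) (y : E) (_ : y ∈ Ω) (_ : x ≠ y),
    (‖iteratedFDerivWithin ℝ (lowFloor s) F Ω x
        - iteratedFDerivWithin ℝ (lowFloor s) F Ω y‖₊ : ℝ≥0∞)
      / ENNReal.ofReal (‖x - y‖ ^ (s - (lowFloor s : ℝ)))

/-- The Hölder norm `‖F‖_{C^s(Ω)}`, valued in `ℝ≥0∞`. -/
def csNorm (s : ℝ) (Ω : Set E) (F : E → ℝ) : ℝ≥0∞ :=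
  derivSup s Ω F + holderSemi s Ω F

/-- Membership in `C^s(Ω)`. -/
def MemCs (s : ℝ) (Ω : Set E) (F : E → ℝ) : Prop :=
  ContDiffOn ℝ (lowFloor s : ℕ∞) F Ω ∧ csNorm s Ω F ≠ ∞

/-- The flat seminorm `‖F‖_{Ḟ^s(Ω)}`, valued in `ℝ≥0∞`.  (In `ℝ≥0∞` one has
`0/0 = 0` and `a/0 = ∞` for `a ≠ 0`, matching the paper's conventions; for
`0 < s < 1` the supremum is empty, hence `0`.) -/
def flatSemi (s : ℝ) (Ω : Set E) (F : E → ℝ) : ℝ≥0∞ :=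
  ⨆ (m : ℕ) (_ : 1 ≤ m) (_ : m ≤ lowFloor s) (x : E) (_ : x ∈ Ω),
    ((‖iteratedFDerivWithin ℝ m F Ω x‖₊ : ℝ≥0∞) ^ s
      / ENNReal.ofReal (F x) ^ (s - (m : ℝ))) ^ (1 / (m : ℝ))

/-- Membership in the cone `F^s(Ω)`. -/
def MemFs (s : ℝ) (Ω : Set E) (F : E → ℝ) : Prop :=
  MemCs s Ω F ∧ (∀ x ∈ Ω, 0 ≤ F x) ∧ flatSemi s Ω F ≠ ∞

/-- The norm `‖F‖_{F^s(Ω)} = ‖F‖_{C^s(Ω)} + ‖F‖_{Ḟ^s(Ω)}`. -/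
def fsNorm (s : ℝ) (Ω : Set E) (F : E → ℝ) : ℝ≥0∞ :=
  csNorm s Ω F + flatSemi s Ω F

/-- `sup_{x ∈ Ω} |F(x)|`, valued in `ℝ≥0∞`. -/
def supNormSet (Ω : Set E) (F : E → ℝ) : ℝ≥0∞ :=
  ⨆ (x : E) (_ : x ∈ Ω), (‖F x‖₊ : ℝ≥0∞)

/-- `P` is (the function given by) a polynomial of degree at most `D`. -/
def IsPolyDeg (D : ℕ) (P : E → ℝ) : Prop :=
  ContDiff ℝ (⊤ : ℕ∞) P ∧ ∀ x, iteratedFDeriv ℝ (D + 1) P x = 0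

/-- The degree-`D` Taylor polynomial (jet) of `F` at `x`, as a function. -/
def jetAt (D : ℕ) (F : E → ℝ) (x : E) : E → ℝ :=
  fun y => ∑ m ∈ Finset.range (D + 1),
    (iteratedFDeriv ℝ m F x fun _ => y - x) / m.factorial

/-- The degree-`D` Taylor polynomial of `F` at `x` using derivatives within `Ω`. -/
def jetWithinAt (D : ℕ) (F : E → ℝ) (Ω : Set E) (x : E) : E → ℝ :=
  fun y => ∑ m ∈ Finset.range (D + 1),
    (iteratedFDerivWithin ℝ m F Ω x fun _ => y - x) / m.factorial

/-- The pointwise flatness quantity `max_{1≤m<s} (|∇^m P(x)|^s / P(x)^{s-m})^{1/m}`. -/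
def jetFlatAt (s : ℝ) (P : E → ℝ) (x : E) : ℝ≥0∞ :=
  ⨆ (m : ℕ) (_ : 1 ≤ m) (_ : m ≤ lowFloor s),
    ((‖iteratedFDeriv ℝ m P x‖₊ : ℝ≥0∞) ^ s
      / ENNReal.ofReal (P x) ^ (s - (m : ℝ))) ^ (1 / (m : ℝ))

/-- The set `Γ(x₀, M)` of flat nonnegative jets. -/
def Gamma (s : ℝ) (x₀ : E) (M : ℝ) : Set (E → ℝ) :=
  {P | IsPolyDeg (lowFloor s) P ∧ 0 ≤ P x₀ ∧
    (∀ m ≤ lowFloor s, ‖iteratedFDeriv ℝ m P x₀‖ ≤ M) ∧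
    jetFlatAt s P x₀ ≤ ENNReal.ofReal M}

/-- `‖P⃗‖_{J C^s(E)}` for a family of jets `P : E → (E → ℝ)`. -/
def jetCNorm (s : ℝ) (Eset : Set E) (P : E → E → ℝ) : ℝ≥0∞ :=
  (⨆ (x : E) (_ : x ∈ Eset) (m : ℕ) (_ : m ≤ lowFloor s),
      (‖iteratedFDeriv ℝ m (P x) x‖₊ : ℝ≥0∞))
  + ⨆ (x : E) (_ : x ∈ Eset) (y : E) (_ : y ∈ Eset) (_ : x ≠ y)
      (m : ℕ) (_ : m ≤ lowFloor s),
      (‖iteratedFDeriv ℝ m (P x - P y) y‖₊ : ℝ≥0∞)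
        / ENNReal.ofReal (‖x - y‖ ^ (s - (m : ℝ)))

/-- `‖P⃗‖_{J Ḟ^s(E)}` for a family of jets. -/
def jetFlatNorm (s : ℝ) (Eset : Set E) (P : E → E → ℝ) : ℝ≥0∞ :=
  ⨆ (x : E) (_ : x ∈ Eset) (m : ℕ) (_ : 1 ≤ m) (_ : m ≤ lowFloor s),
    ((‖iteratedFDeriv ℝ m (P x) x‖₊ : ℝ≥0∞) ^ s
      / ENNReal.ofReal |P x x| ^ (s - (m : ℝ))) ^ (1 / (m : ℝ))

/-- `‖P⃗‖_{J F^s(E)}`. -/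
def jetFsNorm (s : ℝ) (Eset : Set E) (P : E → E → ℝ) : ℝ≥0∞ :=
  jetCNorm s Eset P + jetFlatNorm s Eset P

/-- The trace norm `‖f‖_{F^s(S)}` (with `inf ∅ = ∞`). -/
def traceNorm (s : ℝ) (S : Set E) (f : E → ℝ) : ℝ≥0∞ :=
  ⨅ (F : E → ℝ) (_ : MemFs s (univ : Set E) F ∧ ∀ x ∈ S, F x = f x),
    fsNorm s (univ : Set E) F

/-!
Let `P ∈ Γ(x₀, M)` and `a = P(x₀)`. If `a = 0`, flatness forces the whole jet of `P` at `x₀` to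
vanish and `F = 0` extends it. If `a > 0`, the natural length scale of `P` at `x₀` is
`r = (a / M) ^ (1 / s) ≤ 1`: after dividing the values by `a` and the lengths by `r`, the flatness
of `P` says exactly that the jet becomes `1 + q` with `q(0) = 0` and all derivatives of `q` at the
origin of norm at most `1`. Cutting `q` off on a ball where it is small gives `G = 1 + θ q ≥ 1 / 2`
with derivatives bounded in terms of `n` and `s` only, hence of bounded `F^s` norm. Undoing the
rescaling multiplies this norm by at most `a / r ^ s = M`.
-/

open scoped ContDiff Topology

section Rescaling

/-- The profile `G`, centered at the origin, transplanted to `x₀` with height `a` and length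
scale `r`; rescaling brings a flat jet to a normalized one, at the cost of a factor `a / r ^ s` in
the norm of `F^s`. -/
def rescale (a r : ℝ) (x₀ : E) (G : E → ℝ) (x : E) : ℝ :=
  a * G (r⁻¹ • (x - x₀))

variable {s a r : ℝ} {x₀ : E} {G : E → ℝ}

theorem contDiff_rescale {k : WithTop ℕ∞} (hG : ContDiff ℝ k G) (a r : ℝ) (x₀ : E) :
    ContDiff ℝ k (rescale a r x₀ G) :=
  contDiff_const.mul (hG.comp ((contDiff_id.sub contDiff_const).const_smul r⁻¹))

theorem rescale_eventuallyEq {H : E → ℝ} (h : G =ᶠ[𝓝 0] H) (a r : ℝ) (x₀ : E) :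
    rescale a r x₀ G =ᶠ[𝓝 x₀] rescale a r x₀ H := by
  have hcont : Continuous fun x : E => r⁻¹ • (x - x₀) := by fun_prop
  have htendsto : Filter.Tendsto (fun x => r⁻¹ • (x - x₀)) (𝓝 x₀) (𝓝 0) := by
    simpa only [sub_self, smul_zero] using hcont.tendsto x₀
  filter_upwards [htendsto.eventually h] with x hx
  rw [rescale, rescale, hx]

theorem iteratedFDeriv_rescale {m : ℕ} (hG : ContDiff ℝ m G) (a r : ℝ) (x₀ x : E) :
    iteratedFDeriv ℝ m (rescale a r x₀ G) x =
      (a * r⁻¹ ^ m) • iteratedFDeriv ℝ m G (r⁻¹ • (x - x₀)) := by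
  have hdil : ContDiff ℝ m fun y : E => G (r⁻¹ • y) := hG.comp (contDiff_const_smul r⁻¹)
  calc iteratedFDeriv ℝ m (rescale a r x₀ G) x
      = a • iteratedFDeriv ℝ m (fun y => G (r⁻¹ • (y - x₀))) x :=
        iteratedFDeriv_const_smul_apply' (a := a) (f := fun y => G (r⁻¹ • (y - x₀)))
          (hdil.comp (contDiff_id.sub contDiff_const)).contDiffAt
    _ = a • iteratedFDeriv ℝ m (fun y => G (r⁻¹ • y)) (x - x₀) := by
        rw [iteratedFDeriv_comp_sub (f := fun y => G (r⁻¹ • y))]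
    _ = (a * r⁻¹ ^ m) • iteratedFDeriv ℝ m G (r⁻¹ • (x - x₀)) := by
        rw [iteratedFDeriv_comp_const_smul r⁻¹ hG, smul_smul]

theorem enorm_iteratedFDeriv_rescale {m : ℕ} (hG : ContDiff ℝ m G) (ha : 0 ≤ a) (hr : 0 ≤ r)
    (x₀ x : E) :
    ‖iteratedFDeriv ℝ m (rescale a r x₀ G) x‖ₑ =
      ENNReal.ofReal (a * r⁻¹ ^ m) * ‖iteratedFDeriv ℝ m G (r⁻¹ • (x - x₀))‖ₑ := by
  rw [iteratedFDeriv_rescale hG, enorm_smul, Real.enorm_of_nonneg (by positivity)]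

theorem rescale_rescale_inv (ha : a ≠ 0) (hr : r ≠ 0) (x₀ : E) (G : E → ℝ) :
    rescale a r x₀ (rescale a⁻¹ r⁻¹ (-(r⁻¹ • x₀)) G) = G := by
  funext x
  rw [rescale, rescale, inv_inv, mul_inv_cancel_left₀ ha, ← smul_neg, ← smul_sub,
    smul_inv_smul₀ hr, sub_neg_eq_add, sub_add_cancel]

theorem natCast_lt_of_le_lowFloor (hs : 0 < s) {m : ℕ} (hm : m ≤ lowFloor s) : (m : ℝ) < s := by
  have hceil : 0 < ⌈s⌉₊ := Nat.ceil_pos.2 hs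
  exact Nat.lt_ceil.1 (by unfold lowFloor at hm; omega)

theorem le_lowFloor_add_one (s : ℝ) : s ≤ lowFloor s + 1 := by
  have hceil : ⌈s⌉₊ ≤ lowFloor s + 1 := by unfold lowFloor; omega
  exact_mod_cast Nat.ceil_le.1 hceil

theorem derivSup_rescale_le (hs : 0 < s) (ha : 0 ≤ a) (hr : 0 < r) (hr1 : r ≤ 1)
    (hG : ContDiff ℝ (lowFloor s) G) :
    derivSup s univ (rescale a r x₀ G) ≤ ENNReal.ofReal (a / r ^ s) * derivSup s univ G := by
  simp only [derivSup, iteratedFDerivWithin_univ]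
  refine iSup₂_le fun m hm => iSup₂_le fun x _ => ?_
  have hscale : a * r⁻¹ ^ m ≤ a / r ^ s := by
    rw [div_eq_mul_inv, inv_pow, ← Real.rpow_natCast]
    gcongr a * ?_⁻¹
    exact Real.rpow_le_rpow_of_exponent_ge hr hr1 (natCast_lt_of_le_lowFloor hs hm).le
  rw [← enorm_eq_nnnorm, enorm_iteratedFDeriv_rescale (hG.of_le (mod_cast hm)) ha hr.le]
  gcongr
  exact le_iSup₂_of_le m hm (le_iSup₂_of_le (r⁻¹ • (x - x₀)) trivial le_rfl)

theorem holderSemi_rescale_le (ha : 0 ≤ a) (hr : 0 < r) (hG : ContDiff ℝ (lowFloor s) G) :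
    holderSemi s univ (rescale a r x₀ G) ≤ ENNReal.ofReal (a / r ^ s) * holderSemi s univ G := by
  simp only [holderSemi, iteratedFDerivWithin_univ]
  refine iSup₂_le fun x _ => iSup₂_le fun y _ => iSup_le fun hxy => ?_
  set D := lowFloor s
  set u := r⁻¹ • (x - x₀)
  set v := r⁻¹ • (y - x₀)
  have huv : u - v = r⁻¹ • (x - y) := by rw [← smul_sub, sub_sub_sub_cancel_right]
  have hne : u ≠ v := by
    rw [← sub_ne_zero, huv]
    exact smul_ne_zero (inv_ne_zero hr.ne') (sub_ne_zero.2 hxy)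
  have hdist : ‖x - y‖ ^ (s - (D : ℝ)) = r ^ (s - (D : ℝ)) * ‖u - v‖ ^ (s - (D : ℝ)) := by
    rw [← Real.mul_rpow hr.le (norm_nonneg _), huv, norm_smul, Real.norm_of_nonneg (by positivity),
      mul_inv_cancel_left₀ hr.ne']
  have hscale : a * r⁻¹ ^ D / r ^ (s - (D : ℝ)) = a / r ^ s := by
    rw [Real.rpow_sub hr, Real.rpow_natCast, inv_pow]
    field_simp
  rw [← enorm_eq_nnnorm, iteratedFDeriv_rescale hG, iteratedFDeriv_rescale hG, ← smul_sub,
    enorm_smul, Real.enorm_of_nonneg (by positivity), hdist,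
    ENNReal.ofReal_mul (p := r ^ (s - (D : ℝ))) (by positivity),
    ENNReal.mul_div_mul_comm (.inr ENNReal.ofReal_ne_top) (.inl ENNReal.ofReal_ne_top),
    ← ENNReal.ofReal_div_of_pos (by positivity), hscale]
  gcongr
  exact le_iSup₂_of_le u trivial (le_iSup₂_of_le v trivial (le_iSup_of_le hne le_rfl))

theorem mul_inv_pow_rpow (ha : 0 < a) (hr : 0 < r) (s : ℝ) (m : ℕ) :
    (a * r⁻¹ ^ m) ^ s = (a / r ^ s) ^ m * a ^ (s - (m : ℝ)) := by
  have hcomm : (r⁻¹ ^ m) ^ s = (r ^ s)⁻¹ ^ m := by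
    rw [← Real.rpow_natCast, ← Real.rpow_natCast, ← Real.inv_rpow hr.le, ← Real.rpow_mul,
      ← Real.rpow_mul, mul_comm] <;> positivity
  rw [Real.mul_rpow ha.le (by positivity), hcomm, Real.rpow_sub ha, Real.rpow_natCast,
    div_eq_mul_inv a, mul_pow]
  field_simp

theorem jetFlatAt_rescale (hs : 0 < s) (ha : 0 < a) (hr : 0 < r) (hG : ContDiff ℝ (lowFloor s) G)
    (x : E) :
    jetFlatAt s (rescale a r x₀ G) x =
      ENNReal.ofReal (a / r ^ s) * jetFlatAt s G (r⁻¹ • (x - x₀)) := by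
  simp only [jetFlatAt, ENNReal.mul_iSup]
  refine iSup_congr fun m => iSup_congr fun hm => iSup_congr fun hmD => ?_
  have hms : 0 ≤ s - (m : ℝ) := (sub_pos.2 (natCast_lt_of_le_lowFloor hs hmD)).le
  have hscale : ENNReal.ofReal (a * r⁻¹ ^ m) ^ s / ENNReal.ofReal a ^ (s - (m : ℝ)) =
      ENNReal.ofReal (a / r ^ s) ^ (m : ℝ) := by
    rw [ENNReal.ofReal_rpow_of_pos (by positivity), ENNReal.ofReal_rpow_of_pos ha,
      ← ENNReal.ofReal_div_of_pos (by positivity), mul_inv_pow_rpow ha hr,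
      mul_div_cancel_right₀ _ (by positivity), ENNReal.rpow_natCast, ENNReal.ofReal_pow
      (by positivity)]
  simp only [← enorm_eq_nnnorm]
  rw [enorm_iteratedFDeriv_rescale (hG.of_le (mod_cast hmD)) ha.le hr.le, rescale,
    ENNReal.ofReal_mul (q := G _) ha.le, ENNReal.mul_rpow_of_nonneg _ _ hs.le,
    ENNReal.mul_rpow_of_nonneg _ _ hms,
    ENNReal.mul_div_mul_comm (.inr (by finiteness)) (.inl (by finiteness)), hscale,
    ENNReal.mul_rpow_of_nonneg _ _ (by positivity), one_div,
    ENNReal.rpow_rpow_inv (by positivity)]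

theorem flatSemi_univ (s : ℝ) (F : E → ℝ) : flatSemi s univ F = ⨆ x, jetFlatAt s F x := by
  simp only [flatSemi, jetFlatAt, iteratedFDerivWithin_univ, mem_univ, iSup_pos, iSup_comm (ι := E)]

theorem flatSemi_rescale_le (hs : 0 < s) (ha : 0 < a) (hr : 0 < r)
    (hG : ContDiff ℝ (lowFloor s) G) :
    flatSemi s univ (rescale a r x₀ G) ≤ ENNReal.ofReal (a / r ^ s) * flatSemi s univ G := by
  simp only [flatSemi_univ, jetFlatAt_rescale hs ha hr hG]
  exact iSup_le fun x => by gcongr; exact le_iSup (jetFlatAt s G) _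

theorem fsNorm_rescale_le (hs : 0 < s) (ha : 0 < a) (hr : 0 < r) (hr1 : r ≤ 1)
    (hG : ContDiff ℝ (lowFloor s) G) :
    fsNorm s univ (rescale a r x₀ G) ≤ ENNReal.ofReal (a / r ^ s) * fsNorm s univ G := by
  simp only [fsNorm, csNorm, mul_add]
  exact add_le_add (add_le_add (derivSup_rescale_le hs ha.le hr hr1 hG)
    (holderSemi_rescale_le ha.le hr hG)) (flatSemi_rescale_le hs ha hr hG)

end Rescaling

section BoundedDerivatives

variable {s : ℝ} {F : E → ℝ}

theorem jetFlatAt_le_iff (hs : 0 < s) {x : E} {C : ℝ≥0∞} (hC : C ≠ ⊤) :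
    jetFlatAt s F x ≤ C ↔ ∀ m, 1 ≤ m → m ≤ lowFloor s →
      ‖iteratedFDeriv ℝ m F x‖ₑ ^ s ≤ C ^ m * ENNReal.ofReal (F x) ^ (s - (m : ℝ)) := by
  simp only [jetFlatAt, iSup_le_iff]
  refine forall_congr' fun m => forall_congr' fun hm => forall_congr' fun hmD => ?_
  have hms : 0 ≤ s - (m : ℝ) := (sub_pos.2 (natCast_lt_of_le_lowFloor hs hmD)).le
  rw [one_div, ENNReal.rpow_inv_le_iff (by positivity), ENNReal.rpow_natCast,
    ENNReal.div_le_iff_le_mul (.inr (by finiteness)) (.inl (by finiteness)), enorm_eq_nnnorm]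

theorem jetFlatAt_le_of_norm_iteratedFDeriv_le (hs : 0 < s) {x : E} {δ K : ℝ} (hδ : 0 < δ)
    (hδK : δ ≤ K) (hF : δ ≤ F x)
    (hK : ∀ m, 1 ≤ m → m ≤ lowFloor s → ‖iteratedFDeriv ℝ m F x‖ ≤ K) :
    jetFlatAt s F x ≤ ENNReal.ofReal ((K / δ) ^ s * δ) := by
  have hK0 : 0 < K := hδ.trans_le hδK
  have hF0 : 0 < F x := hδ.trans_le hF
  refine (jetFlatAt_le_iff hs ENNReal.ofReal_ne_top).2 fun m hm hmD => ?_
  have hms : 0 ≤ s - (m : ℝ) := (sub_pos.2 (natCast_lt_of_le_lowFloor hs hmD)).le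
  have hratio : 1 ≤ (K / δ) ^ s := Real.one_le_rpow ((one_le_div hδ).2 hδK) hs.le
  rw [← ofReal_norm, ENNReal.ofReal_rpow_of_nonneg (norm_nonneg _) hs.le,
    ENNReal.ofReal_rpow_of_pos hF0, ← ENNReal.ofReal_pow (by positivity),
    ← ENNReal.ofReal_mul (by positivity)]
  refine ENNReal.ofReal_le_ofReal ?_
  calc ‖iteratedFDeriv ℝ m F x‖ ^ s ≤ K ^ s := by gcongr; exact hK m hm hmD
    _ = (K / δ) ^ s * δ ^ m * δ ^ (s - (m : ℝ)) := by
        rw [Real.div_rpow hK0.le hδ.le, Real.rpow_sub hδ, Real.rpow_natCast]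
        field_simp
    _ ≤ ((K / δ) ^ s) ^ m * δ ^ m * F x ^ (s - (m : ℝ)) := by
        gcongr
        exact le_self_pow₀ hratio (by lia)
    _ = ((K / δ) ^ s * δ) ^ m * F x ^ (s - (m : ℝ)) := by rw [mul_pow]

theorem holderWith_of_nnnorm_le_of_lipschitzWith {X V : Type*} [PseudoEMetricSpace X]
    [SeminormedAddCommGroup V] {f : X → V} {B L α : ℝ≥0} (hB : ∀ x, ‖f x‖₊ ≤ B)
    (hL : LipschitzWith L f) (hα : α ≤ 1) : HolderWith (max (2 * B) L) α f := by
  have hzero : HolderWith (2 * B) 0 f := fun x y => by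
    have hxy : nndist (f x) (f y) ≤ B + B :=
      (nndist_eq_nnnorm_sub (f x) (f y)).trans_le <|
        (nnnorm_sub_le _ _).trans (add_le_add (hB x) (hB y))
    rw [NNReal.coe_zero, ENNReal.rpow_zero, mul_one, edist_nndist, two_mul]
    exact_mod_cast hxy
  exact hzero.of_le_of_le hL.holderWith zero_le hα

theorem holderSemi_univ_le {C α : ℝ≥0} (hα : (α : ℝ) = s - lowFloor s)
    (hF : HolderWith C α (iteratedFDeriv ℝ (lowFloor s) F)) : holderSemi s univ F ≤ C := by
  simp only [holderSemi, iteratedFDerivWithin_univ]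
  refine iSup₂_le fun x _ => iSup₂_le fun y _ => iSup_le fun _ => ENNReal.div_le_of_le_mul ?_
  simpa only [← enorm_eq_nnnorm, edist_eq_enorm_sub, hα, ← ofReal_norm,
    ENNReal.ofReal_rpow_of_nonneg (norm_nonneg (x - y)) (hα ▸ α.coe_nonneg)] using hF x y

theorem fsNorm_univ_le (hs : 0 < s) {δ : ℝ} {K : ℝ≥0} (hδ : 0 < δ) (hδK : δ ≤ K)
    (hsmooth : ContDiff ℝ (lowFloor s + 1) F) (hF : ∀ x, δ ≤ F x)
    (hK : ∀ m ≤ lowFloor s + 1, ∀ x, ‖iteratedFDeriv ℝ m F x‖₊ ≤ K) :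
    fsNorm s univ F ≤ K + (2 * K : ℝ≥0) + ENNReal.ofReal ((K / δ) ^ s * δ) := by
  refine add_le_add (add_le_add ?_ ?_) ?_
  · simp only [derivSup, iteratedFDerivWithin_univ]
    exact iSup₂_le fun m hm => iSup₂_le fun x _ => mod_cast hK m (by lia) x
  · obtain ⟨α, hα⟩ : ∃ α : ℝ≥0, (α : ℝ) = s - lowFloor s :=
      ⟨_, Real.coe_toNNReal _ (sub_pos.2 (natCast_lt_of_le_lowFloor hs le_rfl)).le⟩
    have hα1 : α ≤ 1 := NNReal.coe_le_one.1 (by linarith [le_lowFloor_add_one s])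
    have hlip : LipschitzWith K (iteratedFDeriv ℝ (lowFloor s) F) :=
      lipschitzWith_of_nnnorm_fderiv_le
        (hsmooth.differentiable_iteratedFDeriv (mod_cast Nat.lt_succ_self _)) fun x => by
          simpa only [← NNReal.coe_le_coe, coe_nnnorm, norm_fderiv_iteratedFDeriv] using
            hK (lowFloor s + 1) le_rfl x
    have hholder := holderWith_of_nnnorm_le_of_lipschitzWith (hK _ (Nat.le_succ _)) hlip hα1
    rw [max_eq_left (le_mul_of_one_le_left zero_le one_le_two)] at hholder
    exact holderSemi_univ_le hα hholder
  · rw [flatSemi_univ]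
    exact iSup_le fun x => jetFlatAt_le_of_norm_iteratedFDeriv_le hs hδ hδK (hF x)
      fun m _ hm => mod_cast hK m (by lia) x

end BoundedDerivatives

section NormalizedExtension

theorem iteratedFDeriv_const_add {V : Type*} [NormedAddCommGroup V] [NormedSpace ℝ V] {m : ℕ}
    (hm : m ≠ 0) (c : V) (f : E → V) :
    iteratedFDeriv ℝ m (fun x => c + f x) = iteratedFDeriv ℝ m f := by
  obtain ⟨k, rfl⟩ := Nat.exists_eq_succ_of_ne_zero hm
  have hfderiv : fderiv ℝ (fun x => c + f x) = fderiv ℝ f := funext fun _ => fderiv_const_add c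
  funext x
  rw [iteratedFDeriv_succ_eq_comp_right, iteratedFDeriv_succ_eq_comp_right, hfderiv]

theorem norm_iteratedFDeriv_const_add_le {V : Type*} [NormedAddCommGroup V] [NormedSpace ℝ V]
    (m : ℕ) (c : V) (f : E → V) (x : E) :
    ‖iteratedFDeriv ℝ m (fun x => c + f x) x‖ ≤ ‖c‖ + ‖iteratedFDeriv ℝ m f x‖ := by
  rcases eq_or_ne m 0 with rfl | hm
  · simpa only [norm_iteratedFDeriv_zero] using norm_add_le c (f x)
  · rw [iteratedFDeriv_const_add hm]
    exact le_add_of_nonneg_left (norm_nonneg c)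

namespace IsPolyDeg

variable {D : ℕ} {p : E → ℝ} {x₀ x : E} {B : ℝ}

theorem const_add (hp : IsPolyDeg D p) (c : ℝ) : IsPolyDeg D fun x => c + p x :=
  ⟨contDiff_const.add hp.1, fun x => by rw [iteratedFDeriv_const_add D.succ_ne_zero, hp.2]⟩

theorem rescale (hp : IsPolyDeg D p) (a r : ℝ) (x₀ : E) : IsPolyDeg D (rescale a r x₀ p) :=
  ⟨contDiff_rescale hp.1 a r x₀, fun x => by
    rw [iteratedFDeriv_rescale (hp.1.of_le (mod_cast le_top)), hp.2, smul_zero]⟩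

theorem norm_iteratedFDeriv_le (hp : IsPolyDeg D p) (hB : ∀ m ≤ D, ‖iteratedFDeriv ℝ m p x₀‖ ≤ B)
    {k : ℕ} (hk : k ≤ D + 1) (hx : ‖x - x₀‖ ≤ 1) :
    ‖iteratedFDeriv ℝ k p x‖ ≤ (D + 1 - k) * B := by
  induction hk using Nat.decreasingInduction generalizing x with
  | self => simp [hp.2]
  | of_succ k hk ih =>
    have hB0 : 0 ≤ B := (norm_nonneg _).trans (hB 0 zero_le)
    have hkD : 0 ≤ (D - k : ℝ) := sub_nonneg.2 (mod_cast Nat.lt_succ_iff.1 hk)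
    have hball : x ∈ Metric.closedBall x₀ 1 := mem_closedBall_iff_norm.2 hx
    have hmv : ‖iteratedFDeriv ℝ k p x - iteratedFDeriv ℝ k p x₀‖ ≤ (D - k) * B * ‖x - x₀‖ :=
      (convex_closedBall x₀ 1).norm_image_sub_le_of_norm_fderiv_le (𝕜 := ℝ)
        (fun y _ => hp.1.differentiable_iteratedFDeriv (mod_cast ENat.natCast_lt_top k) y)
        (fun y hy => by
          have hy' := ih (mem_closedBall_iff_norm.1 hy)
          rw [norm_fderiv_iteratedFDeriv]
          push_cast at hy'
          linarith)
        (Metric.mem_closedBall_self zero_le_one) hball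
    calc ‖iteratedFDeriv ℝ k p x‖
        ≤ ‖iteratedFDeriv ℝ k p x₀‖ + ‖iteratedFDeriv ℝ k p x - iteratedFDeriv ℝ k p x₀‖ :=
          norm_le_norm_add_norm_sub' _ _
      _ ≤ B + (D - k) * B * 1 := by
          gcongr
          · exact hB k (Nat.lt_succ_iff.1 hk)
          · exact hmv.trans (by gcongr)
      _ = (D + 1 - k) * B := by ring

theorem abs_sub_le (hp : IsPolyDeg D p) (hB : ∀ m ≤ D, ‖iteratedFDeriv ℝ m p x₀‖ ≤ B)
    (hx : ‖x - x₀‖ ≤ 1) : |p x - p x₀| ≤ D * B * ‖x - x₀‖ :=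
  (convex_closedBall x₀ 1).norm_image_sub_le_of_norm_fderiv_le (𝕜 := ℝ)
    (fun y _ => hp.1.differentiable (by simp) y)
    (fun y hy => by
      simpa [norm_iteratedFDeriv_one] using
        hp.norm_iteratedFDeriv_le hB (k := 1) (by lia) (mem_closedBall_iff_norm.1 hy))
    (Metric.mem_closedBall_self zero_le_one) (mem_closedBall_iff_norm.2 hx)

end IsPolyDeg

theorem exists_norm_iteratedFDeriv_le_of_hasCompactSupport {V : Type*} [NormedAddCommGroup V]
    [NormedSpace ℝ V] {f : E → V} {N : ℕ} (hf : ContDiff ℝ N f) (hc : HasCompactSupport f) :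
    ∃ A : ℝ, ∀ m ≤ N, ∀ x, ‖iteratedFDeriv ℝ m f x‖ ≤ A := by
  have hbound : ∀ m, ∃ A, m ≤ N → ∀ x, ‖iteratedFDeriv ℝ m f x‖ ≤ A := fun m => by
    by_cases hm : m ≤ N
    · obtain ⟨A, hA⟩ := (hc.iteratedFDeriv (𝕜 := ℝ) m).exists_bound_of_continuous
        (hf.continuous_iteratedFDeriv (mod_cast hm))
      exact ⟨A, fun _ => hA⟩
    · exact ⟨0, fun h => (hm h).elim⟩
  choose A hA using hbound
  obtain ⟨A', hA'⟩ := ((Finset.range (N + 1)).image A).bddAbove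
  exact ⟨A', fun m hm x => (hA m hm x).trans <| hA' <| Finset.mem_coe.2 <|
    Finset.mem_image_of_mem A (Finset.mem_range_succ_iff.2 hm)⟩

theorem norm_iteratedFDeriv_mul_le_of_tsupport {θ q : E → ℝ} {N m : ℕ} {A B : ℝ}
    (hθ : ContDiff ℝ N θ) (hq : ContDiff ℝ N q) (hA : ∀ i ≤ N, ∀ x, ‖iteratedFDeriv ℝ i θ x‖ ≤ A)
    (hB : ∀ i ≤ N, ∀ x ∈ tsupport θ, ‖iteratedFDeriv ℝ i q x‖ ≤ B) (hB0 : 0 ≤ B) (hm : m ≤ N)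
    (x : E) : ‖iteratedFDeriv ℝ m (fun x => θ x * q x) x‖ ≤ 2 ^ m * A * B := by
  have hA0 : 0 ≤ A := (norm_nonneg _).trans (hA 0 zero_le x)
  have hterm : ∀ i ≤ m, ‖iteratedFDeriv ℝ i θ x‖ * ‖iteratedFDeriv ℝ (m - i) q x‖ ≤ A * B := by
    intro i hi
    by_cases hx : x ∈ tsupport θ
    · exact mul_le_mul (hA i (hi.trans hm) x) (hB _ (by lia) x hx) (norm_nonneg _) hA0
    · have hzero : iteratedFDeriv ℝ i θ x = 0 :=
        Function.notMem_support.1 fun h => hx (support_iteratedFDeriv_subset i h)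
      rw [hzero, norm_zero, zero_mul]
      positivity
  calc ‖iteratedFDeriv ℝ m (fun x => θ x * q x) x‖
      ≤ ∑ i ∈ Finset.range (m + 1), (m.choose i : ℝ) * ‖iteratedFDeriv ℝ i θ x‖ *
          ‖iteratedFDeriv ℝ (m - i) q x‖ := norm_iteratedFDeriv_mul_le hθ hq x (mod_cast hm)
    _ ≤ ∑ i ∈ Finset.range (m + 1), (m.choose i : ℝ) * (A * B) := by
        refine Finset.sum_le_sum fun i hi => ?_
        rw [mul_assoc]
        gcongr (_ : ℝ) * ?_
        exact hterm i (Finset.mem_range_succ_iff.1 hi)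
    _ = 2 ^ m * A * B := by
        rw [← Finset.sum_mul, mul_assoc]
        exact_mod_cast congrArg (fun k : ℕ => (k : ℝ) * (A * B)) (Nat.sum_range_choose m)

/-- `q` is the nonconstant part of the normalized jet `1 + q`: a polynomial of degree at most `D`
that vanishes at the origin and has all its derivatives there bounded by `1`. Every flat jet with
positive value at its base point is a rescaling of such a `1 + q`. -/
structure IsNormalizedPerturbation (D : ℕ) (q : E → ℝ) : Prop where
  isPolyDeg : IsPolyDeg D q
  map_zero : q 0 = 0
  norm_iteratedFDeriv_zero_le : ∀ m ≤ D, ‖iteratedFDeriv ℝ m q 0‖ ≤ 1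

namespace IsNormalizedPerturbation

variable {D : ℕ} {q : E → ℝ} {x : E}

theorem norm_iteratedFDeriv_le (hq : IsNormalizedPerturbation D q) {k : ℕ} (hk : k ≤ D + 1)
    (hx : ‖x‖ ≤ 1) : ‖iteratedFDeriv ℝ k q x‖ ≤ D + 1 := by
  have h := hq.isPolyDeg.norm_iteratedFDeriv_le hq.norm_iteratedFDeriv_zero_le hk
    (x := x) (by rwa [sub_zero])
  linarith [k.cast_nonneg (α := ℝ)]

theorem abs_le (hq : IsNormalizedPerturbation D q) (hx : ‖x‖ ≤ 1) : |q x| ≤ D * ‖x‖ := by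
  simpa only [hq.map_zero, sub_zero, mul_one] using
    hq.isPolyDeg.abs_sub_le hq.norm_iteratedFDeriv_zero_le (x := x) (by rwa [sub_zero])

theorem abs_mul_le {θ : E → ℝ} {ρ : ℝ} (hq : IsNormalizedPerturbation D q) (hθ : θ x ∈ Icc 0 1)
    (hsupp : x ∈ Function.support θ → ‖x‖ ≤ ρ) (hρ0 : 0 ≤ ρ) (hρ1 : ρ ≤ 1) :
    |θ x * q x| ≤ D * ρ := by
  by_cases hx : x ∈ Function.support θ
  · calc |θ x * q x| ≤ 1 * (D * ‖x‖) := by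
          rw [abs_mul, abs_of_nonneg hθ.1]
          gcongr
          exacts [hθ.2, hq.abs_le ((hsupp hx).trans hρ1)]
      _ ≤ D * ρ := by rw [one_mul]; gcongr; exact hsupp hx
  · rw [Function.notMem_support.1 hx, zero_mul, abs_zero]
    positivity

end IsNormalizedPerturbation

theorem exists_cutoff [FiniteDimensional ℝ E] (N : ℕ) {ρ : ℝ} (hρ : 0 < ρ) :
    ∃ (θ : E → ℝ) (A : ℝ), ContDiff ℝ ∞ θ ∧ (∀ x, θ x ∈ Icc 0 1) ∧ θ =ᶠ[𝓝 0] 1 ∧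
      (∀ x ∈ tsupport θ, ‖x‖ ≤ ρ) ∧ ∀ m ≤ N, ∀ x, ‖iteratedFDeriv ℝ m θ x‖ ≤ A := by
  let θ : ContDiffBump (0 : E) := ⟨ρ / 2, ρ, half_pos hρ, half_lt_self hρ⟩
  obtain ⟨A, hA⟩ := exists_norm_iteratedFDeriv_le_of_hasCompactSupport
    (θ.contDiff (n := N)) θ.hasCompactSupport
  exact ⟨θ, A, θ.contDiff, fun _ => ⟨θ.nonneg, θ.le_one⟩, θ.eventuallyEq_one,
    fun x hx => mem_closedBall_zero_iff.1 (θ.tsupport_eq ▸ hx), hA⟩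

theorem exists_extension_one_add [FiniteDimensional ℝ E] (D : ℕ) :
    ∃ K : ℝ≥0, 1 ≤ K ∧ ∀ q : E → ℝ, IsNormalizedPerturbation D q →
      ∃ G : E → ℝ, ContDiff ℝ ∞ G ∧ (∀ x, 1 / 2 ≤ G x) ∧
        (∀ m ≤ D + 1, ∀ x, ‖iteratedFDeriv ℝ m G x‖₊ ≤ K) ∧ G =ᶠ[𝓝 0] fun x => 1 + q x := by
  obtain ⟨θ, A, hθ, hθI, hθ1, hsupp, hA⟩ := exists_cutoff (E := E) (D + 1)
    (ρ := 1 / (2 * (D + 1))) (by positivity)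
  have hA0 : 0 ≤ A := (norm_nonneg _).trans (hA 0 zero_le 0)
  have hρ1 : 1 / (2 * ((D : ℝ) + 1)) ≤ 1 :=
    div_le_one_of_le₀ (by linarith [D.cast_nonneg (α := ℝ)]) (by positivity)
  refine ⟨1 + (2 ^ (D + 1) * A * (D + 1)).toNNReal, le_self_add, fun q hq =>
    ⟨fun x => 1 + θ x * q x, contDiff_const.add (hθ.mul hq.isPolyDeg.1), fun x => ?_,
      fun m hm x => ?_, ?_⟩⟩
  · have hhalf := hq.abs_mul_le (hθI x) (fun hx => hsupp x (subset_tsupport θ hx))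
      (by positivity) hρ1
    have hradius : (D : ℝ) * (1 / (2 * (D + 1))) ≤ 1 / 2 := by
      rw [mul_one_div, div_le_div_iff₀ (by positivity) two_pos]
      linarith
    linarith [neg_le_of_abs_le hhalf]
  · have hmul : ‖iteratedFDeriv ℝ m (fun x => θ x * q x) x‖ ≤ 2 ^ m * A * (D + 1) :=
      norm_iteratedFDeriv_mul_le_of_tsupport (hθ.of_le (mod_cast le_top))
        (hq.isPolyDeg.1.of_le (mod_cast le_top)) hA
        (fun i hi y hy => hq.norm_iteratedFDeriv_le hi ((hsupp y hy).trans hρ1)) (by positivity)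
        hm x
    rw [← NNReal.coe_le_coe, coe_nnnorm, NNReal.coe_add, NNReal.coe_one,
      Real.coe_toNNReal _ (by positivity)]
    calc ‖iteratedFDeriv ℝ m (fun x => 1 + θ x * q x) x‖
        ≤ ‖(1 : ℝ)‖ + ‖iteratedFDeriv ℝ m (fun x => θ x * q x) x‖ :=
          norm_iteratedFDeriv_const_add_le m 1 _ x
      _ ≤ 1 + 2 ^ m * A * (D + 1) := by rw [norm_one]; gcongr
      _ ≤ 1 + 2 ^ (D + 1) * A * (D + 1) := by gcongr; exact one_le_two
  · filter_upwards [hθ1] with x hx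
    rw [hx, Pi.one_apply, one_mul]

theorem exists_fsNorm_extension_one_add [FiniteDimensional ℝ E] {s : ℝ} (hs : 0 < s) :
    ∃ C : ℝ, 0 < C ∧ ∀ q : E → ℝ, IsNormalizedPerturbation (lowFloor s) q →
      ∃ G : E → ℝ, ContDiff ℝ ∞ G ∧ (∀ x, 0 ≤ G x) ∧ fsNorm s univ G ≤ ENNReal.ofReal C ∧
        G =ᶠ[𝓝 0] fun x => 1 + q x := by
  obtain ⟨K, hK1, hK⟩ := exists_extension_one_add (E := E) (lowFloor s)
  have hhalf : 1 / 2 ≤ (K : ℝ) := one_half_lt_one.le.trans (mod_cast hK1)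
  refine ⟨K + 2 * K + (K / (1 / 2)) ^ s * (1 / 2), ?_, fun q hq => ?_⟩
  · have hK0 : 0 < (K : ℝ) := one_half_pos.trans_le hhalf
    exact add_pos_of_pos_of_nonneg (add_pos_of_pos_of_nonneg hK0 (by positivity)) (by positivity)
  obtain ⟨G, hG, hGhalf, hGK, hGq⟩ := hK q hq
  refine ⟨G, hG, fun x => one_half_pos.le.trans (hGhalf x), ?_, hGq⟩
  refine (fsNorm_univ_le hs one_half_pos hhalf (hG.of_le (mod_cast le_top)) hGhalf hGK).trans_eq ?_
  rw [ENNReal.ofReal_add (by positivity) (by positivity),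
    ENNReal.ofReal_add (by positivity) (by positivity), ENNReal.ofReal_coe_nnreal,
    ← ENNReal.ofReal_coe_nnreal (p := 2 * K), NNReal.coe_mul, NNReal.coe_ofNat]

end NormalizedExtension

section FlatJets

variable {s M : ℝ} {x₀ : E} {P : E → ℝ}

theorem iteratedFDeriv_eq_zero_of_mem_Gamma (hs : 0 < s) (hP : P ∈ Gamma s x₀ M)
    (hzero : P x₀ = 0) {m : ℕ} (hm : m ≤ lowFloor s) : iteratedFDeriv ℝ m P x₀ = 0 := by
  rcases Nat.eq_zero_or_pos m with rfl | hm0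
  · rw [← norm_eq_zero, norm_iteratedFDeriv_zero, hzero, norm_zero]
  · have hms : 0 < s - (m : ℝ) := sub_pos.2 (natCast_lt_of_le_lowFloor hs hm)
    have h := (jetFlatAt_le_iff hs ENNReal.ofReal_ne_top).1 hP.2.2.2 m hm0 hm
    rw [hzero, ENNReal.ofReal_zero, ENNReal.zero_rpow_of_pos hms, mul_zero, nonpos_iff_eq_zero,
      ENNReal.rpow_eq_zero_iff_of_pos hs] at h
    rwa [← ofReal_norm, ENNReal.ofReal_eq_zero, norm_le_zero_iff] at h

theorem norm_iteratedFDeriv_le_one_of_jetFlatAt_le_one (hs : 0 < s) (hone : P x₀ = 1)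
    (hflat : jetFlatAt s P x₀ ≤ 1) {m : ℕ} (hm0 : 1 ≤ m) (hm : m ≤ lowFloor s) :
    ‖iteratedFDeriv ℝ m P x₀‖ ≤ 1 := by
  have h := (jetFlatAt_le_iff hs ENNReal.one_ne_top).1 hflat m hm0 hm
  rw [hone, ENNReal.ofReal_one, ENNReal.one_rpow, one_pow, mul_one] at h
  have henorm : ‖iteratedFDeriv ℝ m P x₀‖ₑ ≤ 1 := by
    rwa [← ENNReal.one_rpow s, ENNReal.rpow_le_rpow_iff hs] at h
  rwa [← ofReal_norm, ENNReal.ofReal_le_one] at henorm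

theorem isNormalizedPerturbation_of_jetFlatAt_le_one {p : E → ℝ} (hs : 0 < s)
    (hp : IsPolyDeg (lowFloor s) p) (hone : p 0 = 1) (hflat : jetFlatAt s p 0 ≤ 1) :
    IsNormalizedPerturbation (lowFloor s) fun y => -1 + p y where
  isPolyDeg := hp.const_add (-1)
  map_zero := by rw [hone, neg_add_cancel]
  norm_iteratedFDeriv_zero_le m hm := by
    rcases Nat.eq_zero_or_pos m with rfl | hm0
    · rw [norm_iteratedFDeriv_zero, hone, neg_add_cancel, norm_zero]
      exact zero_le_one
    · rw [iteratedFDeriv_const_add hm0.ne']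
      exact norm_iteratedFDeriv_le_one_of_jetFlatAt_le_one hs hone hflat hm0 hm

theorem exists_div_rpow_eq {a : ℝ} (hs : 0 < s) (ha : 0 < a) (haM : a ≤ M) :
    ∃ r : ℝ, 0 < r ∧ r ≤ 1 ∧ a / r ^ s = M := by
  have hM : 0 < M := ha.trans_le haM
  refine ⟨(a / M) ^ s⁻¹, by positivity,
    Real.rpow_le_one (by positivity) ((div_le_one hM).2 haM) (by positivity), ?_⟩
  rw [Real.rpow_inv_rpow (by positivity) hs.ne', div_div_cancel₀ ha.ne']

theorem exists_eq_rescale_of_mem_Gamma (hs : 0 < s) (hP : P ∈ Gamma s x₀ M) (hpos : 0 < P x₀) :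
    ∃ r : ℝ, 0 < r ∧ r ≤ 1 ∧ P x₀ / r ^ s = M ∧ ∃ q : E → ℝ,
      IsNormalizedPerturbation (lowFloor s) q ∧ P = rescale (P x₀) r x₀ fun y => 1 + q y := by
  obtain ⟨hpoly, -, hbound, hflat⟩ := hP
  have hPM : P x₀ ≤ M := by
    simpa only [norm_iteratedFDeriv_zero, Real.norm_of_nonneg hpos.le] using hbound 0 zero_le
  obtain ⟨r, hr, hr1, hM⟩ := exists_div_rpow_eq hs hpos hPM
  set a := P x₀ with ha
  let p : E → ℝ := rescale a⁻¹ r⁻¹ (-(r⁻¹ • x₀)) P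
  have hcenter : r⁻¹⁻¹ • ((0 : E) - -(r⁻¹ • x₀)) = x₀ := by
    rw [inv_inv, zero_sub, neg_neg, smul_inv_smul₀ hr.ne']
  have hone : p 0 = 1 := by
    simp only [p, rescale, hcenter, ← ha, inv_mul_cancel₀ hpos.ne']
  have hflat1 : jetFlatAt s p 0 ≤ 1 := by
    have hscale : a⁻¹ / r⁻¹ ^ s = M⁻¹ := by
      rw [Real.inv_rpow hr.le, ← inv_div_inv, inv_inv, inv_inv, ← hM, inv_div, div_eq_mul_inv,
        mul_comm]
    rw [jetFlatAt_rescale hs (inv_pos.2 hpos) (inv_pos.2 hr) (hpoly.1.of_le (mod_cast le_top)),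
      hcenter, hscale]
    calc ENNReal.ofReal M⁻¹ * jetFlatAt s P x₀ ≤ ENNReal.ofReal M⁻¹ * ENNReal.ofReal M := by gcongr
      _ = 1 := by
        have hM0 : 0 < M := hpos.trans_le hPM
        rw [← ENNReal.ofReal_mul (by positivity), inv_mul_cancel₀ hM0.ne', ENNReal.ofReal_one]
  refine ⟨r, hr, hr1, hM, fun y => -1 + p y, isNormalizedPerturbation_of_jetFlatAt_le_one hs
    (hpoly.rescale _ _ _) hone hflat1, ?_⟩
  simp only [add_neg_cancel_left]
  exact (rescale_rescale_inv hpos.ne' hr.ne' x₀ P).symm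

theorem memFs_univ_of_fsNorm_ne_top {F : E → ℝ} (hF : ContDiff ℝ (lowFloor s) F)
    (hnonneg : ∀ x, 0 ≤ F x) (hnorm : fsNorm s univ F ≠ ⊤) : MemFs s univ F :=
  ⟨⟨hF.contDiffOn, ne_top_of_le_ne_top hnorm le_self_add⟩, fun x _ => hnonneg x,
    ne_top_of_le_ne_top hnorm le_add_self⟩

theorem fsNorm_univ_zero (hs : 0 < s) : fsNorm s univ (fun _ : E => (0 : ℝ)) = 0 := by
  have hflat : ∀ x, jetFlatAt s (fun _ : E => (0 : ℝ)) x = 0 := fun x =>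
    nonpos_iff_eq_zero.1 <| (jetFlatAt_le_iff hs ENNReal.zero_ne_top).2 fun m _ _ => by
      rw [iteratedFDeriv_fun_zero, Pi.zero_apply, ← ofReal_norm, norm_zero, ENNReal.ofReal_zero,
        ENNReal.zero_rpow_of_pos hs]
      exact zero_le
  simp [fsNorm, csNorm, derivSup, holderSemi, flatSemi_univ, hflat, iteratedFDerivWithin_univ,
    iteratedFDeriv_fun_zero]

theorem exists_fsNorm_extension_of_mem_Gamma_of_pos [FiniteDimensional ℝ E] (hs : 0 < s) :
    ∃ C : ℝ, 0 < C ∧ ∀ (x₀ : E) (M : ℝ), ∀ P ∈ Gamma s x₀ M, 0 < P x₀ →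
      ∃ F : E → ℝ, ContDiff ℝ ∞ F ∧ (∀ x, 0 ≤ F x) ∧ F =ᶠ[𝓝 x₀] P ∧
        fsNorm s univ F ≤ ENNReal.ofReal (C * M) := by
  obtain ⟨C, hC, hext⟩ := exists_fsNorm_extension_one_add (E := E) hs
  refine ⟨C, hC, fun x₀ M P hP hpos => ?_⟩
  obtain ⟨r, hr, hr1, hM, q, hq, hPq⟩ := exists_eq_rescale_of_mem_Gamma hs hP hpos
  obtain ⟨G, hG, hG0, hnorm, hGq⟩ := hext q hq
  refine ⟨rescale (P x₀) r x₀ G, contDiff_rescale hG _ _ _,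
    fun x => mul_nonneg hpos.le (hG0 _), ?_, ?_⟩
  · have hFP := rescale_eventuallyEq hGq (P x₀) r x₀
    rwa [← hPq] at hFP
  · calc fsNorm s univ (rescale (P x₀) r x₀ G)
        ≤ ENNReal.ofReal (P x₀ / r ^ s) * fsNorm s univ G :=
          fsNorm_rescale_le hs hpos hr hr1 (hG.of_le (mod_cast le_top))
      _ ≤ ENNReal.ofReal (P x₀ / r ^ s) * ENNReal.ofReal C := by gcongr
      _ = ENNReal.ofReal (C * M) := by
        rw [← ENNReal.ofReal_mul (by positivity), hM, mul_comm]

end FlatJets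

theorem statement11_general [FiniteDimensional ℝ E] {s : ℝ} (hs : 0 < s) :
    ∃ C : ℝ, 0 < C ∧ ∀ (x₀ : E) (M : ℝ), ∀ P ∈ Gamma s x₀ M,
      ∃ F : E → ℝ, ContDiff ℝ ∞ F ∧ MemFs s univ F ∧
        (∀ m ≤ lowFloor s, iteratedFDeriv ℝ m F x₀ = iteratedFDeriv ℝ m P x₀) ∧
        fsNorm s univ F ≤ ENNReal.ofReal (C * M) := by
  obtain ⟨C, hC, hext⟩ := exists_fsNorm_extension_of_mem_Gamma_of_pos (E := E) hs
  refine ⟨C, hC, fun x₀ M P hP => ?_⟩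
  obtain ⟨F, hF, hF0, hjet, hnorm⟩ : ∃ F : E → ℝ, ContDiff ℝ ∞ F ∧ (∀ x, 0 ≤ F x) ∧
      (∀ m ≤ lowFloor s, iteratedFDeriv ℝ m F x₀ = iteratedFDeriv ℝ m P x₀) ∧
      fsNorm s univ F ≤ ENNReal.ofReal (C * M) := by
    rcases hP.2.1.eq_or_lt with hzero | hpos
    · refine ⟨fun _ => 0, contDiff_const, fun _ => le_rfl, fun m hm => ?_,
        (fsNorm_univ_zero hs).trans_le zero_le⟩
      rw [iteratedFDeriv_eq_zero_of_mem_Gamma hs hP hzero.symm hm, iteratedFDeriv_fun_zero,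
        Pi.zero_apply]
    · obtain ⟨F, hF, hF0, hFP, hnorm⟩ := hext x₀ M P hP hpos
      exact ⟨F, hF, hF0, fun m _ => (hFP.iteratedFDeriv ℝ m).eq_of_nhds, hnorm⟩
  exact ⟨F, hF, memFs_univ_of_fsNorm_ne_top (hF.of_le (mod_cast le_top)) hF0
    (ne_top_of_le_ne_top ENNReal.ofReal_ne_top hnorm), hjet, hnorm⟩

/-- Lemma `Whitney-single jet`: there is `C = C(n,s)` such
that every jet `P ∈ Γ(x₀,M)` extends to a nonnegative `F ∈ F^s(ℝⁿ)` whose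
`⌊s⌋`-jet at `x₀` is `P`, with `‖F‖_{Ḟ^s} ≤ CM`, `‖F‖_{C^s} ≤ CM`, and hence
`‖F‖_{F^s} ≤ CM`. -/
theorem statement11 (n : ℕ) (hn : 1 ≤ n) (s : ℝ) (hs : 0 < s) :
    ∃ C : ℝ, 0 < C ∧
      ∀ (x₀ : EuclideanSpace ℝ (Fin n)) (M : ℝ), 0 ≤ M →
      ∀ P : EuclideanSpace ℝ (Fin n) → ℝ, P ∈ Gamma s x₀ M →
      ∃ F : EuclideanSpace ℝ (Fin n) → ℝ,
        MemFs s (Set.univ : Set (EuclideanSpace ℝ (Fin n))) F ∧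
        (∀ m ≤ lowFloor s, iteratedFDeriv ℝ m F x₀ = iteratedFDeriv ℝ m P x₀) ∧
        (∀ x, 0 ≤ F x) ∧
        flatSemi s (Set.univ : Set (EuclideanSpace ℝ (Fin n))) F ≤
          ENNReal.ofReal (C * M) ∧
        csNorm s (Set.univ : Set (EuclideanSpace ℝ (Fin n))) F ≤
          ENNReal.ofReal (C * M) ∧
        fsNorm s (Set.univ : Set (EuclideanSpace ℝ (Fin n))) F ≤
          ENNReal.ofReal (C * M) := by
  obtain ⟨C, hC, hext⟩ := statement11_general (E := EuclideanSpace ℝ (Fin n)) hs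
  refine ⟨C, hC, fun x₀ M _ P hP => ?_⟩
  obtain ⟨F, -, hF, hjet, hnorm⟩ := hext x₀ M P hP
  exact ⟨F, hF, hjet, fun x => hF.2.1 x trivial, le_add_self.trans hnorm, le_self_add.trans hnorm,
    hnorm⟩

end
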